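/- Let $Z$ be a positive random variable with $\mathbb{E}[Z^a]<\infty$ for all $a\in(-\varepsilon,\varepsilon)$ for some $\varepsilon>0$, and let $(Y_t)_{t\ge 0}$ be positive random variables independent of $Z$. If $Y_t Z$ converges in distribution to a positive random variable $U$ as $t\to\infty$, then $Y_t$ converges in distribution to some positive random variable $Y$, and the law of $Y$ is the unique law such that for $Y$ independent of $Z$ one has $YZ \overset{d}{=} U$. -/

import Mathlib

open MeasureTheory ProbabilityTheory Filter Real Set
open scoped ENNReal NNReal Topology

lemma aux_dense (ζ : Measure ℝ) [IsProbabilityMeasure ζ] (ε : ℝ) (hε : 0 < ε)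
    (h : ∀ a ∈ Set.Ioo (-ε) ε, Integrable (fun x => Real.exp (a * x)) ζ) :
    Dense {t : ℝ | charFun ζ t ≠ 0} := by
  intro t0
  by_contra hcon
  rw [mem_closure_iff_frequently, not_frequently] at hcon
  have hsub : Set.Ioo (-ε) ε ⊆ integrableExpSet id ζ := fun a ha => h a ha
  have hint : Set.Ioo (-ε) ε ⊆ interior (integrableExpSet id ζ) :=
    interior_maximal hsub isOpen_Ioo
  have han : AnalyticOnNhd ℂ (complexMGF id ζ) {z | z.re ∈ Set.Ioo (-ε) ε} :=
    analyticOnNhd_complexMGF.mono fun z hz => hint hz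
  have hpre : IsPreconnected {z : ℂ | z.re ∈ Set.Ioo (-ε) ε} :=
    ((convex_Ioo (-ε) ε).linear_preimage Complex.reLm).isPreconnected
  have hmap : Tendsto (fun t : ℝ => (t : ℂ) * Complex.I) (𝓝[≠] t0) (𝓝[≠] ((t0 : ℂ) * Complex.I)) := by
    apply tendsto_nhdsWithin_of_tendsto_nhds_of_eventually_within
    · have : Continuous (fun t : ℝ => (t : ℂ) * Complex.I) := by fun_prop
      exact (this.tendsto t0).mono_left nhdsWithin_le_nhds
    · filter_upwards [self_mem_nhdsWithin] with t ht
      simpa using ht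
  have hfreq : ∃ᶠ z in 𝓝[≠] ((t0 : ℂ) * Complex.I), complexMGF id ζ z = 0 := by
    apply hmap.frequently
    apply Eventually.frequently
    filter_upwards [hcon.filter_mono nhdsWithin_le_nhds] with t ht
    rw [complexMGF_id_mul_I]
    simpa using ht
  have := han.eqOn_zero_of_preconnected_of_frequently_eq_zero hpre
    (by simp [hε]) hfreq (x := 0) (by simp [hε])
  have h0 := complexMGF_id_mul_I (μ := ζ) 0
  simp at h0
  simp [h0] at this

lemma aux_unique (ζ ν ν' : Measure ℝ) [IsProbabilityMeasure ζ] [IsProbabilityMeasure ν]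
    [IsProbabilityMeasure ν'] (hd : Dense {t : ℝ | charFun ζ t ≠ 0})
    (h : ∀ t, charFun ν t * charFun ζ t = charFun ν' t * charFun ζ t) : ν = ν' := by
  apply Measure.ext_of_charFun
  apply Continuous.ext_on hd continuous_charFun continuous_charFun
  intro t ht
  exact mul_right_cancel₀ ht (h t)

lemma aux_tight (ζ κ : Measure ℝ) [IsProbabilityMeasure ζ] [IsProbabilityMeasure κ]
    (η : ℕ → ProbabilityMeasure ℝ)
    (h : ∀ t, Tendsto (fun n => charFun (η n : Measure ℝ) t * charFun ζ t) atTop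
      (𝓝 (charFun κ t))) :
    ∃ ν : ProbabilityMeasure ℝ, ∃ φ : ℕ → ℕ, StrictMono φ ∧ Tendsto (η ∘ φ) atTop (𝓝 ν) ∧
      ∀ t, charFun (ν : Measure ℝ) t * charFun ζ t = charFun κ t := by
  have hT : IsTightMeasureSet (Set.range fun n => (η n : Measure ℝ) ∗ ζ) := by
    apply isTightMeasureSet_of_tendsto_charFun (f := charFun κ) continuous_charFun.continuousAt
    intro t
    simpa [charFun_conv] using h t
  have hT1 := tendsto_measure_norm_gt_of_isTightMeasureSet hT
  have hζ := tendsto_measure_norm_gt_of_isTightMeasureSet (isTightMeasureSet_singleton (μ := ζ))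
  obtain ⟨M, hM⟩ : ∃ M : ℝ, ζ {x | M < ‖x‖} < 1 / 2 := by
    have := (hζ.eventually (gt_mem_nhds (show (0 : ℝ≥0∞) < 1 / 2 by simp))).exists
    simpa using this
  have hM' : 1 / 2 ≤ ζ {x | ‖x‖ ≤ M} := by
    have h1 : {x : ℝ | ‖x‖ ≤ M} = {x | M < ‖x‖}ᶜ := by ext; simp
    rw [h1, prob_compl_eq_one_sub (measurableSet_lt measurable_const measurable_norm)]
    have : (1 : ℝ≥0∞) / 2 = 1 - 1 / 2 := by simp
    rw [this]
    exact tsub_le_tsub_left hM.le _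
  have key : ∀ n (r : ℝ), (η n : Measure ℝ) {x | r < ‖x‖} ≤
      2 * ((η n : Measure ℝ) ∗ ζ) {x | r - M < ‖x‖} := by
    intro n r
    have h1 : ((η n : Measure ℝ).prod ζ) ({x | r < ‖x‖} ×ˢ {x | ‖x‖ ≤ M}) ≤
        ((η n : Measure ℝ) ∗ ζ) {x | r - M < ‖x‖} := by
      rw [Measure.conv, Measure.map_apply (by fun_prop)
        (measurableSet_lt measurable_const measurable_norm)]
      apply measure_mono
      rintro ⟨x, y⟩ ⟨hx, hy⟩
      simp only [mem_ofPred_eq, mem_preimage] at hx hy ⊢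
      have := norm_sub_le (x + y) y
      simp only [add_sub_cancel_right] at this
      linarith
    rw [Measure.prod_prod] at h1
    calc (η n : Measure ℝ) {x | r < ‖x‖}
        = 2 * ((η n : Measure ℝ) {x | r < ‖x‖} * (1 / 2)) := by
          rw [mul_comm, mul_assoc, one_div, ENNReal.inv_mul_cancel (by simp) (by simp), mul_one]
      _ ≤ _ := by gcongr; exact le_trans (by gcongr) h1
  have htight : IsTightMeasureSet {((μ : ProbabilityMeasure ℝ) : Measure ℝ) | μ ∈ Set.range η} := by
    apply isTightMeasureSet_of_tendsto_measure_norm_gt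
    have hlim : Tendsto (fun r : ℝ => 2 * ⨆ μ ∈ Set.range fun n => (η n : Measure ℝ) ∗ ζ,
        μ {x | r - M < ‖x‖}) atTop (𝓝 0) := by
      have := ENNReal.Tendsto.const_mul (a := 2) (hT1.comp (tendsto_atTop_add_const_right atTop (-M) tendsto_id)) (by simp)
      simpa [sub_eq_add_neg, Function.comp_def] using this
    refine tendsto_of_tendsto_of_tendsto_of_le_of_le tendsto_const_nhds hlim (fun _ => zero_le) ?_
    intro r
    refine iSup₂_le ?_
    rintro _ ⟨_, ⟨n, rfl⟩, rfl⟩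
    refine (key n r).trans ?_
    refine mul_le_mul' le_rfl ?_
    exact le_iSup₂_of_le (f := fun (μ : Measure ℝ)
      (_ : μ ∈ Set.range fun n => (η n : Measure ℝ) ∗ ζ) => μ {x | r - M < ‖x‖})
      ((η n : Measure ℝ) ∗ ζ) ⟨n, rfl⟩ le_rfl
  have hc := isCompact_closure_of_isTightMeasureSet htight
  obtain ⟨ν, -, φ, hφ, hlim⟩ := hc.tendsto_subseq (x := η) fun n => subset_closure ⟨n, rfl⟩
  refine ⟨ν, φ, hφ, hlim, fun t => ?_⟩
  have h1 := (ProbabilityMeasure.tendsto_iff_tendsto_charFun.1 hlim t).mul_const (charFun ζ t)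
  exact tendsto_nhds_unique h1 ((h t).comp hφ.tendsto_atTop)

lemma aux_exp_log (α : Measure ℝ) (h : ∀ᵐ x ∂α, 0 < x) :
    Measure.map Real.exp (Measure.map Real.log α) = α := by
  rw [Measure.map_map Real.measurable_exp Real.measurable_log]
  have : Real.exp ∘ Real.log =ᵐ[α] id := by
    filter_upwards [h] with x hx
    simp [Real.exp_log hx]
  rw [Measure.map_congr this, Measure.map_id]

lemma aux_log_exp (α : Measure ℝ) :
    Measure.map Real.log (Measure.map Real.exp α) = α := by
  rw [Measure.map_map Real.measurable_log Real.measurable_exp]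
  have : Real.log ∘ Real.exp = id := by ext; simp
  rw [this, Measure.map_id]

lemma aux_log_mul (α β : Measure ℝ) [IsProbabilityMeasure α] [IsProbabilityMeasure β]
    (hα : ∀ᵐ x ∂α, 0 < x) (hβ : ∀ᵐ x ∂β, 0 < x) :
    Measure.map Real.log (Measure.map (fun p : ℝ × ℝ => p.1 * p.2) (α.prod β)) =
      Measure.map Real.log α ∗ Measure.map Real.log β := by
  rw [Measure.conv, Measure.map_prod_map _ _ Real.measurable_log Real.measurable_log,
    Measure.map_map Real.measurable_log (by fun_prop),
    Measure.map_map (by fun_prop) (by fun_prop)]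
  apply Measure.map_congr
  filter_upwards [Measure.quasiMeasurePreserving_fst.ae hα,
    Measure.quasiMeasurePreserving_snd.ae hβ] with p h1 h2
  simp [Real.log_mul h1.ne' h2.ne']

lemma aux_mul_pos (α β : Measure ℝ) [IsProbabilityMeasure α] [IsProbabilityMeasure β]
    (hα : ∀ᵐ x ∂α, 0 < x) (hβ : ∀ᵐ x ∂β, 0 < x) :
    ∀ᵐ x ∂(Measure.map (fun p : ℝ × ℝ => p.1 * p.2) (α.prod β)), 0 < x := by
  rw [ae_map_iff (by fun_prop) measurableSet_Ioi]
  filter_upwards [Measure.quasiMeasurePreserving_fst.ae hα,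
    Measure.quasiMeasurePreserving_snd.ae hβ] with p h1 h2
  exact mul_pos h1 h2

lemma aux_pos_of_mul_pos (α β : Measure ℝ) [IsProbabilityMeasure α] [IsProbabilityMeasure β]
    (hβ : ∀ᵐ x ∂β, 0 < x)
    (h : ∀ᵐ x ∂(Measure.map (fun p : ℝ × ℝ => p.1 * p.2) (α.prod β)), 0 < x) :
    ∀ᵐ x ∂α, 0 < x := by
  rw [ae_map_iff (by fun_prop) measurableSet_Ioi] at h
  have h2 : ∀ᵐ p ∂(α.prod β), 0 < p.1 := by
    filter_upwards [h, Measure.quasiMeasurePreserving_snd.ae hβ] with p h1 h2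
    exact pos_of_mul_pos_left h1 h2.le
  have h3 := Measure.map_fst_prod (μ := α) (ν := β)
  simp only [measure_univ, one_smul] at h3
  rw [← h3, ae_map_iff (by fun_prop) measurableSet_Ioi]
  exact h2

/-- Convergence of positive laws implies convergence of the laws of logarithms. -/
lemma aux_log_tendsto (α : ℝ → ProbabilityMeasure ℝ) (β : ProbabilityMeasure ℝ)
    (hβ : ∀ᵐ x ∂(β : Measure ℝ), 0 < x)
    (h : Tendsto α atTop (𝓝 β)) :
    Tendsto (fun t => (α t).map Real.measurable_log.aemeasurable) atTop
      (𝓝 (β.map Real.measurable_log.aemeasurable)) := by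
  apply tendsto_of_forall_isOpen_le_liminf'
  intro G hG
  have hO : IsOpen (Real.log ⁻¹' G ∩ Set.Ioi 0) := by
    rw [inter_comm]
    exact (Real.continuousOn_log.mono fun x hx => (ne_of_gt hx)).isOpen_inter_preimage isOpen_Ioi hG
  have h1 := ProbabilityMeasure.le_liminf_measure_open_of_tendsto h hO
  have e : ∀ γ : ProbabilityMeasure ℝ,
      (γ.map Real.measurable_log.aemeasurable : Measure ℝ) G = (γ : Measure ℝ) (Real.log ⁻¹' G) := by
    intro γ
    rw [ProbabilityMeasure.toMeasure_map, Measure.map_apply Real.measurable_log hG.measurableSet]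
  simp only [e]
  have e2 : (β : Measure ℝ) (Real.log ⁻¹' G) = (β : Measure ℝ) (Real.log ⁻¹' G ∩ Set.Ioi 0) := by
    apply measure_congr
    filter_upwards [hβ] with x hx
    apply propext
    exact ⟨fun h => ⟨h, hx⟩, fun h => h.1⟩
  rw [e2]
  refine h1.trans (liminf_le_liminf (Eventually.of_forall fun t => ?_))
  exact measure_mono inter_subset_left

theorem stmt0 {Ω : Type*} [MeasurableSpace Ω] (μ : Measure Ω) [IsProbabilityMeasure μ]
    (Z U : Ω → ℝ) (Y : ℝ → Ω → ℝ)
    (hZ : Measurable Z) (hU : Measurable U) (hY : ∀ t, Measurable (Y t))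
    (hZpos : ∀ᵐ ω ∂μ, 0 < Z ω) (hUpos : ∀ᵐ ω ∂μ, 0 < U ω)
    (hYpos : ∀ t, ∀ᵐ ω ∂μ, 0 < Y t ω)
    (ε : ℝ) (hε : 0 < ε)
    (hmom : ∀ a ∈ Set.Ioo (-ε) ε, Integrable (fun ω => Z ω ^ a) μ)
    (hindep : ∀ t, IndepFun (Y t) Z μ)
    (hconv : ∀ f : BoundedContinuousFunction ℝ ℝ,
      Tendsto (fun t => ∫ ω, f (Y t ω * Z ω) ∂μ) atTop (𝓝 (∫ ω, f (U ω) ∂μ))) :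
    ∃ ν : Measure ℝ, IsProbabilityMeasure ν ∧ ν (Set.Iic 0) = 0 ∧
      (∀ f : BoundedContinuousFunction ℝ ℝ,
        Tendsto (fun t => ∫ ω, f (Y t ω) ∂μ) atTop (𝓝 (∫ x, f x ∂ν))) ∧
      Measure.map (fun p : ℝ × ℝ => p.1 * p.2) (ν.prod (Measure.map Z μ)) = Measure.map U μ ∧
      ∀ ν' : Measure ℝ, IsProbabilityMeasure ν' →
        Measure.map (fun p : ℝ × ℝ => p.1 * p.2) (ν'.prod (Measure.map Z μ)) = Measure.map U μ →
        ν' = ν := by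
  have pZ : IsProbabilityMeasure (Measure.map Z μ) := Measure.isProbabilityMeasure_map hZ.aemeasurable
  have pU : IsProbabilityMeasure (Measure.map U μ) := Measure.isProbabilityMeasure_map hU.aemeasurable
  have pY : ∀ t, IsProbabilityMeasure (Measure.map (Y t) μ) := fun t =>
    Measure.isProbabilityMeasure_map (hY t).aemeasurable
  have hZp : ∀ᵐ x ∂(Measure.map Z μ), 0 < x := (ae_map_iff hZ.aemeasurable measurableSet_Ioi).2 hZpos
  have hUp : ∀ᵐ x ∂(Measure.map U μ), 0 < x := (ae_map_iff hU.aemeasurable measurableSet_Ioi).2 hUpos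
  have hYp : ∀ t, ∀ᵐ x ∂(Measure.map (Y t) μ), 0 < x := fun t =>
    (ae_map_iff (hY t).aemeasurable measurableSet_Ioi).2 (hYpos t)
  obtain ⟨ζ, hζ⟩ : ∃ ζ, ζ = Measure.map Real.log (Measure.map Z μ) := ⟨_, rfl⟩
  obtain ⟨κ, hκ⟩ : ∃ κ, κ = Measure.map Real.log (Measure.map U μ) := ⟨_, rfl⟩
  have pζ : IsProbabilityMeasure ζ := hζ ▸ Measure.isProbabilityMeasure_map (by fun_prop)
  have pκ : IsProbabilityMeasure κ := hκ ▸ Measure.isProbabilityMeasure_map (by fun_prop)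
  let η : ℝ → ProbabilityMeasure ℝ := fun t =>
    ⟨Measure.map Real.log (Measure.map (Y t) μ), Measure.isProbabilityMeasure_map (by fun_prop)⟩
  -- density of nonzeros of the characteristic function
  have hd : Dense {t : ℝ | charFun ζ t ≠ 0} := by
    apply aux_dense ζ ε hε
    intro a ha
    rw [hζ, Measure.map_map (by fun_prop) hZ,
      integrable_map_measure (by fun_prop) (by fun_prop)]
    refine (hmom a ha).congr ?_
    filter_upwards [hZpos] with ω hω
    simp [Real.rpow_def_of_pos hω, mul_comm]
  -- laws of products
  have hYZ : ∀ t, Measure.map (fun ω => Y t ω * Z ω) μ =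
      Measure.map (fun p : ℝ × ℝ => p.1 * p.2) ((Measure.map (Y t) μ).prod (Measure.map Z μ)) := by
    intro t
    rw [← (hindep t).map_prod_eq_prod_map_map (hY t).aemeasurable hZ.aemeasurable,
      Measure.map_map (by fun_prop) ((hY t).prodMk hZ)]
    rfl
  have hchar : ∀ t, Tendsto (fun s : ℝ => charFun (η s : Measure ℝ) t * charFun ζ t) atTop
      (𝓝 (charFun κ t)) := by
    intro t
    let α : ℝ → ProbabilityMeasure ℝ := fun s => ⟨Measure.map (fun ω => Y s ω * Z ω) μ,
      Measure.isProbabilityMeasure_map ((hY s).mul hZ).aemeasurable⟩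
    let β : ProbabilityMeasure ℝ := ⟨Measure.map U μ, pU⟩
    have h1 : Tendsto α atTop (𝓝 β) := by
      rw [ProbabilityMeasure.tendsto_iff_forall_integral_tendsto]
      intro f
      have e1 : ∀ s, ∫ x, f x ∂(α s : Measure ℝ) = ∫ ω, f (Y s ω * Z ω) ∂μ := fun s =>
        integral_map ((hY s).mul hZ).aemeasurable f.continuous.aestronglyMeasurable
      have e2 : ∫ x, f x ∂(β : Measure ℝ) = ∫ ω, f (U ω) ∂μ :=
        integral_map hU.aemeasurable f.continuous.aestronglyMeasurable
      simpa only [e1, e2] using hconv f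
    have h2 := aux_log_tendsto α β hUp h1
    apply tendsto_of_seq_tendsto
    intro s hs
    have h3 := ProbabilityMeasure.tendsto_iff_tendsto_charFun.1 (h2.comp hs) t
    have e3 : (β.map Real.measurable_log.aemeasurable : Measure ℝ) = κ := by
      rw [hκ]; rfl
    have e4 : ∀ r, ((α r).map Real.measurable_log.aemeasurable : Measure ℝ) =
        (η r : Measure ℝ) ∗ ζ := by
      intro r
      rw [ProbabilityMeasure.toMeasure_map]
      change Measure.map Real.log (Measure.map (fun ω => Y r ω * Z ω) μ) = _
      rw [hYZ, aux_log_mul _ _ (hYp r) hZp, hζ]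
      rfl
    simp only [Function.comp_apply, e3, e4, charFun_conv] at h3
    exact h3
  obtain ⟨ν₀, -, -, -, hν₀⟩ := aux_tight ζ κ (fun n : ℕ => η n)
    (fun t => (hchar t).comp tendsto_natCast_atTop_atTop)
  have hlim : Tendsto η atTop (𝓝 ν₀) := by
    apply tendsto_of_seq_tendsto
    intro s hs
    apply tendsto_of_subseq_tendsto
    intro ns hns
    obtain ⟨ν₁, φ, -, hφ, hν₁⟩ := aux_tight ζ κ (fun n : ℕ => η (s (ns n)))
      (fun t => (hchar t).comp (hs.comp hns))
    have : ν₁ = ν₀ := Subtype.ext (aux_unique ζ ν₁ ν₀ hd fun t => (hν₁ t).trans (hν₀ t).symm)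
    exact ⟨φ, this ▸ hφ⟩
  have pν : IsProbabilityMeasure (Measure.map Real.exp (ν₀ : Measure ℝ)) :=
    Measure.isProbabilityMeasure_map (by fun_prop)
  have hνp : ∀ᵐ x ∂(Measure.map Real.exp (ν₀ : Measure ℝ)), 0 < x :=
    (ae_map_iff (by fun_prop) measurableSet_Ioi).2 (Eventually.of_forall Real.exp_pos)
  refine ⟨Measure.map Real.exp (ν₀ : Measure ℝ), pν, ?_, ?_, ?_, ?_⟩
  · rw [ae_iff] at hνp
    simpa [Set.Iic_def] using hνp
  · intro f
    have h1 := ProbabilityMeasure.tendsto_iff_forall_integral_tendsto.1 hlim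
      (f.compContinuous ⟨Real.exp, Real.continuous_exp⟩)
    rw [integral_map (by fun_prop) f.continuous.aestronglyMeasurable]
    refine h1.congr fun t => ?_
    have e : Measure.map (Y t) μ = Measure.map Real.exp (η t : Measure ℝ) :=
      (aux_exp_log _ (hYp t)).symm
    rw [← integral_map (hY t).aemeasurable f.continuous.aestronglyMeasurable, e,
      integral_map (by fun_prop) f.continuous.aestronglyMeasurable]
    rfl
  · have hc : (ν₀ : Measure ℝ) ∗ ζ = κ := by
      apply Measure.ext_of_charFun
      ext t
      rw [charFun_conv, hν₀]
    rw [← aux_exp_log _ (aux_mul_pos _ _ hνp hZp), aux_log_mul _ _ hνp hZp, aux_log_exp, ← hζ, hc,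
      hκ, aux_exp_log _ hUp]
  · intro ν' pν' h'
    have hp' : ∀ᵐ x ∂ν', 0 < x := aux_pos_of_mul_pos ν' _ hZp (h' ▸ hUp)
    have p' : IsProbabilityMeasure (Measure.map Real.log ν') :=
      Measure.isProbabilityMeasure_map (by fun_prop)
    have h2 : Measure.map Real.log ν' ∗ ζ = κ := by
      rw [hζ, ← aux_log_mul _ _ hp' hZp, h', hκ]
    have h3 : Measure.map Real.log ν' = (ν₀ : Measure ℝ) := by
      apply aux_unique ζ _ _ hd
      intro t
      rw [← charFun_conv, h2, hν₀]
    rw [← h3, aux_exp_log _ hp']
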